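/- Let n be a positive integer with rad(n) ∣ q − 1, let k be a positive integer with gcd(n,k) = 1, and for a positive integer w set d^{(w)} := gcd(n, q^w − 1). Then: (i) d^{(km)} = d^{(m)} for every positive integer m; (ii) d^{(2k)} = 2^l · d^{(1)}, where l = min{max{0, ν_2(n) − ν_2(q−1)}, ν_2(q+1)}. -/

import Mathlib

/-!
For (i), put `a = q ^ m` and write `a ^ k - 1 = (1 + a + ⋯ + a ^ (k - 1)) * (a - 1)`. Modulo each
prime dividing `n` we have `a ≡ 1`, so the geometric sum is `≡ k` and hence coprime to `n`.

For (ii), part (i) gives `d⁽²ᵏ⁾ = d⁽²⁾`, and `q ^ 2 - 1 = (q + 1) * (q - 1)` gives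
`d⁽²⁾ = d⁽¹⁾ * gcd (n / d⁽¹⁾) (q + 1)`. A prime dividing the last factor divides both `q - 1` and
`q + 1`, so it is `2`; the factor is therefore a power of `2`, and
`ν₂ (n / d⁽¹⁾) = max 0 (ν₂ n - ν₂ (q - 1))`.
-/

theorem gcd_mul_eq_gcd_mul_gcd_div_gcd (n b c : ℕ) :
    n.gcd (b * c) = n.gcd c * (n / n.gcd c).gcd b := by
  obtain hg | hg := (n.gcd c).eq_zero_or_pos
  · simp [Nat.gcd_eq_zero_iff.mp hg]
  have hcop : Nat.Coprime (c / n.gcd c) (n / n.gcd c) := (Nat.coprime_div_gcd_div_gcd hg).symm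
  calc n.gcd (b * c)
      = (n.gcd c * (n / n.gcd c)).gcd (n.gcd c * (b * (c / n.gcd c))) := by
        rw [mul_left_comm, Nat.mul_div_cancel' (Nat.gcd_dvd_left n c),
          Nat.mul_div_cancel' (Nat.gcd_dvd_right n c)]
    _ = n.gcd c * (n / n.gcd c).gcd b := by
        rw [Nat.gcd_mul_left, hcop.gcd_mul_right_cancel_right]

section padicValNat

variable {p : ℕ} [Fact p.Prime]

theorem padicValNat_gcd {a b : ℕ} (ha : a ≠ 0) (hb : b ≠ 0) :
    padicValNat p (a.gcd b) = min (padicValNat p a) (padicValNat p b) := by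
  simp only [← Nat.factorization_def _ (Fact.out : p.Prime), Nat.factorization_gcd ha hb,
    Finsupp.inf_apply]

theorem padicValNat_div_gcd {n c : ℕ} (hn : n ≠ 0) (hc : c ≠ 0) :
    padicValNat p (n / n.gcd c) = padicValNat p n - padicValNat p c := by
  rw [padicValNat.div_of_dvd (Nat.gcd_dvd_left n c), padicValNat_gcd hn hc]
  omega

theorem eq_prime_pow_padicValNat {m : ℕ} (hm : m ≠ 0) (h : ∀ {r : ℕ}, r.Prime → r ∣ m → r = p) :
    m = p ^ padicValNat p m := by
  have hpow := Nat.eq_prime_pow_of_unique_prime_dvd hm h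
  rw [hpow, padicValNat.prime_pow]

end padicValNat

section ModEqOne

variable {n a : ℕ}

theorem coprime_geom_sum {k : ℕ} (h : ∀ p, p.Prime → p ∣ n → a ≡ 1 [MOD p])
    (hnk : n.Coprime k) : n.Coprime (∑ i ∈ Finset.range k, a ^ i) := by
  refine Nat.coprime_of_dvd fun p hp hpn hpsum ↦ ?_
  have hsum : ∑ i ∈ Finset.range k, a ^ i ≡ k [MOD p] := by
    have ha : (a : ZMod p) = 1 := by
      simpa using (ZMod.natCast_eq_natCast_iff a 1 p).mpr (h p hp hpn)
    simp [← ZMod.natCast_eq_natCast_iff, ha]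
  exact Nat.not_coprime_of_dvd_of_dvd hp.one_lt hpn ((hsum.dvd_iff dvd_rfl).mp hpsum) hnk

theorem gcd_pow_sub_one_eq_gcd_sub_one {k : ℕ} (ha : 1 ≤ a)
    (h : ∀ p, p.Prime → p ∣ n → a ≡ 1 [MOD p]) (hnk : n.Coprime k) :
    n.gcd (a ^ k - 1) = n.gcd (a - 1) := by
  rw [← geom_sum_mul_of_one_le ha k,
    (coprime_geom_sum h hnk).symm.gcd_mul_left_cancel_right]

theorem gcd_add_one_eq_two_pow (hn : n ≠ 0) (h : ∀ p, p.Prime → p ∣ n → a ≡ 1 [MOD p]) :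
    n.gcd (a + 1) = 2 ^ min (padicValNat 2 n) (padicValNat 2 (a + 1)) := by
  have eq_two {p : ℕ} (hp : p.Prime) (hpgcd : p ∣ n.gcd (a + 1)) : p = 2 := by
    obtain ⟨hpn, hpa⟩ := Nat.dvd_gcd_iff.mp hpgcd
    have hp2 : p ∣ 2 := (((h p hp hpn).add_right 1).dvd_iff dvd_rfl).mp hpa
    exact (Nat.prime_dvd_prime_iff_eq hp Nat.prime_two).mp hp2
  rw [← padicValNat_gcd hn a.succ_ne_zero]
  exact eq_prime_pow_padicValNat (Nat.gcd_ne_zero_left hn) eq_two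

theorem gcd_sq_sub_one_eq_two_pow_mul (hn : n ≠ 0) (ha : 1 < a)
    (h : ∀ p, p.Prime → p ∣ n → a ≡ 1 [MOD p]) :
    n.gcd (a ^ 2 - 1) =
      2 ^ min (padicValNat 2 n - padicValNat 2 (a - 1)) (padicValNat 2 (a + 1)) *
        n.gcd (a - 1) := by
  have hfactor : a ^ 2 - 1 = (a + 1) * (a - 1) := by simpa using Nat.sq_sub_sq a 1
  have hdvd : n / n.gcd (a - 1) ∣ n := Nat.div_dvd_of_dvd (Nat.gcd_dvd_left n (a - 1))
  rw [hfactor, gcd_mul_eq_gcd_mul_gcd_div_gcd,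
    gcd_add_one_eq_two_pow (ne_zero_of_dvd_ne_zero hn hdvd) fun p hp hpn ↦ h p hp (hpn.trans hdvd),
    padicValNat_div_gcd hn (Nat.sub_ne_zero_of_lt ha), mul_comm]

end ModEqOne

theorem modEq_one_of_prod_primeFactors_dvd {n a p : ℕ} (hn : n ≠ 0) (ha : 1 ≤ a)
    (hrad : (∏ r ∈ n.primeFactors, r) ∣ a - 1) (hp : p.Prime) (hpn : p ∣ n) : a ≡ 1 [MOD p] := by
  have hp_mem : p ∈ n.primeFactors := Nat.mem_primeFactors.mpr ⟨hp, hpn, hn⟩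
  exact ((Nat.modEq_iff_dvd' ha).mpr ((Finset.dvd_prod_of_mem _ hp_mem).trans hrad)).symm

theorem stmt16_general (q : ℕ) (hq : 1 < q)
    (n : ℕ) (hn : 0 < n) (hrad : (∏ p ∈ n.primeFactors, p) ∣ q - 1)
    (k : ℕ) (hcop : Nat.Coprime n k)
    (d : ℕ → ℕ) (hd : ∀ w : ℕ, d w = Nat.gcd n (q ^ w - 1)) :
    (∀ m : ℕ, d (k * m) = d m) ∧
    d (2 * k) =
      2 ^ (min (max 0 (padicValNat 2 n - padicValNat 2 (q - 1))) (padicValNat 2 (q + 1))) *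
        d 1 := by
  have hmod (p : ℕ) (hp : p.Prime) (hpn : p ∣ n) : q ≡ 1 [MOD p] :=
    modEq_one_of_prod_primeFactors_dvd hn.ne' hq.le hrad hp hpn
  have hmul (m : ℕ) : d (k * m) = d m := by
    have hmod_pow (p : ℕ) (hp : p.Prime) (hpn : p ∣ n) : q ^ m ≡ 1 [MOD p] := by
      simpa using (hmod p hp hpn).pow m
    rw [hd, hd, mul_comm, pow_mul,
      gcd_pow_sub_one_eq_gcd_sub_one (Nat.one_le_pow _ _ hq.le) hmod_pow hcop]
  refine ⟨hmul, ?_⟩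
  rw [mul_comm 2 k, hmul, hd, hd, pow_one, zero_max,
    gcd_sq_sub_one_eq_two_pow_mul hn.ne' hq hmod]

/-- Let `n` be a positive integer with `rad n ∣ q - 1`, `k` a positive
integer with `gcd(n, k) = 1`, and for a positive integer `w` set
`d⁽ʷ⁾ := gcd(n, q^w - 1)`.  Then (i) `d⁽ᵏᵐ⁾ = d⁽ᵐ⁾` for every positive integer `m`, and
(ii) `d⁽²ᵏ⁾ = 2^l * d⁽¹⁾` where `l = min (max 0 (ν₂ n - ν₂ (q - 1))) (ν₂ (q + 1))`. -/
theorem stmt16 (q : ℕ) (hq : IsPrimePow q)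
    (n : ℕ) (hn : 0 < n) (hrad : (∏ p ∈ n.primeFactors, p) ∣ q - 1)
    (k : ℕ) (hk : 0 < k) (hcop : Nat.Coprime n k)
    (d : ℕ → ℕ) (hd : ∀ w : ℕ, d w = Nat.gcd n (q ^ w - 1)) :
    (∀ m : ℕ, 0 < m → d (k * m) = d m) ∧
    d (2 * k) =
      2 ^ (min (max 0 (padicValNat 2 n - padicValNat 2 (q - 1))) (padicValNat 2 (q + 1))) *
        d 1 :=
  (stmt16_general q hq.one_lt n hn hrad k hcop d hd).imp_left fun hmul m _ ↦ hmul m
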